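/- There exists a partition of the set {1, …, 7824} into two parts such that neither part contains a Pythagorean triple; that is, there exists a function f : ℕ → Bool such that for all natural numbers a, b, c with 1 ≤ a, 1 ≤ b, c ≤ 7824, a ≤ 7824, b ≤ 7824 and a² + b² = c², it is not the case that f a = f b and f b = f c. -/

import Mathlib

/-!
Every Pythagorean triple with positive legs is, up to swapping the legs, a positive multiple of
`(m ^ 2 - n ^ 2, 2 * m * n, m ^ 2 + n ^ 2)` with `0 < n < m`. Fewer than twenty thousand
choices of `m`, `n` and the multiplier give a hypotenuse of at most `7824`, few enough to test an
explicit coloring on all of them by evaluation in the kernel.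
-/

/-- The triples `(a, b, c)` given by Euclid's formula, with the even leg of the generating triple
in second place. The bound `n ≤ m` keeps the subtraction from being truncated; degenerate triples
with a zero entry are included. -/
def IsEuclidTriple (a b c : ℕ) : Prop :=
  ∃ k m n : ℕ, n ≤ m ∧ a = k * (m ^ 2 - n ^ 2) ∧ b = k * (2 * m * n) ∧ c = k * (m ^ 2 + n ^ 2)

theorem isEuclidTriple_natAbs (k m n : ℤ) :
    IsEuclidTriple (k * (m ^ 2 - n ^ 2)).natAbs (k * (2 * m * n)).natAbs
      (k * (m ^ 2 + n ^ 2)).natAbs := by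
  wlog hnm : n.natAbs ≤ m.natAbs generalizing m n
  · rw [← Int.natAbs_neg, ← mul_neg, neg_sub, mul_right_comm, add_comm]
    exact this n m (le_of_not_ge hnm)
  have hsq : n ^ 2 ≤ m ^ 2 := Int.natAbs_le_iff_sq_le.mp hnm
  have hadd : (m ^ 2 + n ^ 2).natAbs = m.natAbs ^ 2 + n.natAbs ^ 2 := by
    rw [Int.natAbs_add_of_nonneg (sq_nonneg m) (sq_nonneg n), Int.natAbs_pow, Int.natAbs_pow]
  have hsub : (m ^ 2 - n ^ 2).natAbs = m.natAbs ^ 2 - n.natAbs ^ 2 := by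
    rw [Int.natAbs_sub_of_nonneg_of_le (sq_nonneg n) hsq, Int.natAbs_pow, Int.natAbs_pow]
  refine ⟨k.natAbs, m.natAbs, n.natAbs, hnm, ?_, ?_, ?_⟩
  · rw [Int.natAbs_mul, hsub]
  · simp [Int.natAbs_mul]
  · rw [Int.natAbs_mul, hadd]

theorem isEuclidTriple_or_swap {a b c : ℕ} (h : a ^ 2 + b ^ 2 = c ^ 2) :
    IsEuclidTriple a b c ∨ IsEuclidTriple b a c := by
  have hpyth : PythagoreanTriple (a : ℤ) b c := by
    simp only [PythagoreanTriple, ← sq]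
    exact_mod_cast h
  obtain ⟨k, m, n, hab, hc⟩ := PythagoreanTriple.classification.mp hpyth
  have hmn := isEuclidTriple_natAbs k m n
  have hcAbs : c = (k * (m ^ 2 + n ^ 2)).natAbs := by
    rcases hc with hc | hc
    · rw [← hc, Int.natAbs_natCast]
    · rw [← Int.natAbs_neg, ← neg_mul, ← hc, Int.natAbs_natCast]
  rcases hab with ⟨ha, hb⟩ | ⟨ha, hb⟩
  · left
    rwa [← ha, ← hb, ← hcAbs, Int.natAbs_natCast, Int.natAbs_natCast] at hmn
  · right
    rwa [← ha, ← hb, ← hcAbs, Int.natAbs_natCast, Int.natAbs_natCast] at hmn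

/-- All three entries of the triple `(a, b, c)` have the same color under `f`. -/
def IsMonochromatic {α : Type*} (f : ℕ → α) (a b c : ℕ) : Prop :=
  f a = f b ∧ f b = f c

/-- No positive multiple of the triple `(a, b, c)` whose last entry is at most `N` is monochromatic
under `f`. The multipliers are written `k + 1` with `k < N / c`, which for `0 < c` says
`(k + 1) * c ≤ N`, so that the quantifier is bounded. -/
def AvoidsMultiples {α : Type*} (f : ℕ → α) (N a b c : ℕ) : Prop :=
  ∀ k < N / c, ¬ IsMonochromatic f ((k + 1) * a) ((k + 1) * b) ((k + 1) * c)

section Coloring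

variable {α : Type*} {f : ℕ → α} {N a b c : ℕ}

theorem IsMonochromatic.swap (h : IsMonochromatic f a b c) : IsMonochromatic f b a c :=
  ⟨h.1.symm, h.1.trans h.2⟩

theorem AvoidsMultiples.of_lt (h : N < c) : AvoidsMultiples f N a b c := by
  intro k hk
  rw [Nat.div_eq_of_lt h] at hk
  exact absurd hk k.not_lt_zero

theorem IsEuclidTriple.not_isMonochromatic (h : IsEuclidTriple a b c)
    (hf : ∀ m n, 0 < n → n < m → AvoidsMultiples f N (m ^ 2 - n ^ 2) (2 * m * n) (m ^ 2 + n ^ 2))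
    (ha : 0 < a) (hb : 0 < b) (hc : c ≤ N) : ¬ IsMonochromatic f a b c := by
  obtain ⟨k, m, n, -, rfl, rfl, rfl⟩ := h
  have hk : k ≠ 0 := (Nat.pos_of_mul_pos_right ha).ne'
  have hn : 0 < n := Nat.pos_of_mul_pos_left (Nat.pos_of_mul_pos_left hb)
  have hnm : n < m :=
    lt_of_pow_lt_pow_left₀ 2 m.zero_le (Nat.sub_pos_iff_lt.mp (Nat.pos_of_mul_pos_left ha))
  obtain ⟨k, rfl⟩ := Nat.exists_eq_add_one_of_ne_zero hk
  exact hf m n hn hnm k ((Nat.le_div_iff_mul_le (by positivity)).mpr hc)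

end Coloring

theorem forall_lt_iff_forall_block {d : ℕ} (hd : 0 < d) {N : ℕ} {P : ℕ → Prop} :
    (∀ k < N, P k) ↔ ∀ q ≤ N / d, ∀ r < min d (N - d * q), P (d * q + r) where
  mp h q _ r hr := h _ (by omega)
  mpr h k hk := by
    have hdiv := Nat.div_add_mod k d
    have hmod := Nat.mod_lt k hd
    rw [← hdiv]
    exact h (k / d) (Nat.div_le_div_right hk.le) (k % d) (by omega)

-- The instance for `∀ k < K` recurses to depth `K`; nesting two short ranges keeps the kernel's
-- recursion shallow.
instance AvoidsMultiples.decidable {α : Type*} [DecidableEq α] (f : ℕ → α) (N a b c : ℕ) :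
    Decidable (AvoidsMultiples f N a b c) :=
  haveI (a b c : ℕ) : Decidable (IsMonochromatic f a b c) := inferInstanceAs (Decidable (_ ∧ _))
  decidable_of_iff _ (forall_lt_iff_forall_block (d := 40) (by decide)).symm

/-- The bits of a coloring of `{1, …, 7824}` without monochromatic Pythagorean triples, cut into
words of `256` bits: bit `i % 256` of word `i / 256` is the color of `i`. Such colorings are found
by computer search. -/
def pythColorWords : List ℕ :=
  [ 102956836469355820570292422454379770371258228145892317821599407713888109496558,
    70159465635932697718712222335781767092812065486030750495551729025453898318421,
    109298783031158961971269140922797199317922865025696992289438818195876007839430,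
    112107719794796029778108183585861559021619566994584123330477164950245096231796,
    75856601624716885468317197798435353361155988252443310275084665525761513849881,
    60756421305807051121902413346392871531593666903856930414592568005117545911653,
    5595028606715670998997787154116670126531343285732437499601318845046109804311,
    11187266289103515246645793750053681173610344718438543489661633441525523591416,
    101438248723811974543002301015052918975609648986681804072288550810288394877413,
    48586989388449999471679488409800081532709851398329854557549882578115677577993,
    60798871138109186299246438981137102152556391511763724243766869951146297090748,
    102106049587398178548052246787577485302370354451133704136705690923211679863134,
    63997432916659875006392399060643686049766716275712485929625640240486401165890,
    89124335320929444519288000720755868949068016817143631938187901810666334641430,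
    30361380937479406535230659853048382621012359179790523883434339526125769920358,
    5508307557927428236743754282372507177049888740442801160406484428695074070110,
    42355707623688296151672835138349997604491936063536648549750679026591895126215,
    69663729641681718473660344506589097659922697039127394337762900345527009937579,
    102460163619609878808107225150816064282231152571616671292793966989150010244661,
    42203632676582905057765776494604802414354923368676534687177023458105837717122,
    115767614729920591526589643590078148609334471571734742132792381367196328053090,
    105409510455741585904545651850100161588621016380569126272364304624436491713798,
    27888812268392190321040633710970360003887227493264083239110096020072311086179,
    63261326451801333020316615648669615986749347640410877414265657499784853235163,
    12444745771118392418688525999164645962530754952047998241590514408734996196690,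
    46023436171285210326586425360728846698654654199974726639350549830535283639247,
    113701274455380398446385513226717716851081939777922178658084855590822975820993,
    110216509878275696553641430010134245020699345717218773291987383231036644234406,
    56165080556437169655796760918205116084524038912397917173747493944467486972524,
    108344993931921948433496460431357777417209933062613644930542914122428283713795,
    33137370787847045560292476619350877313260180 ]

/-- The coloring of `ℕ` read off from `pythColorWords`; numbers beyond the table get `false`. -/
def pythColoring (i : ℕ) : Bool :=
  (pythColorWords.getD (i / 256) 0).testBit (i % 256)

theorem pythColoring_avoidsMultiples_of_lt : ∀ m < 89, ∀ n < m, 0 < n →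
    AvoidsMultiples pythColoring 7824 (m ^ 2 - n ^ 2) (2 * m * n) (m ^ 2 + n ^ 2) := by
  decide +kernel

theorem pythColoring_avoidsMultiples (m n : ℕ) (hn : 0 < n) (hnm : n < m) :
    AvoidsMultiples pythColoring 7824 (m ^ 2 - n ^ 2) (2 * m * n) (m ^ 2 + n ^ 2) := by
  rcases lt_or_ge m 89 with hm | hm
  · exact pythColoring_avoidsMultiples_of_lt m hm n hnm hn
  · exact .of_lt (by nlinarith)

/-- There exists a partition of {1, …, 7824} into two parts (given by a 2-coloring
`f : ℕ → Bool`) such that neither part contains a Pythagorean triple. -/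
theorem bPyth_7824_sat :
    ∃ f : ℕ → Bool, ∀ a b c : ℕ,
      1 ≤ a → 1 ≤ b → a ≤ 7824 → b ≤ 7824 → c ≤ 7824 →
      a ^ 2 + b ^ 2 = c ^ 2 → ¬ (f a = f b ∧ f b = f c) := by
  refine ⟨pythColoring, fun a b c ha hb _ _ hc habc hmono ↦ ?_⟩
  rcases isEuclidTriple_or_swap habc with h | h
  · exact h.not_isMonochromatic pythColoring_avoidsMultiples ha hb hc hmono
  · exact h.not_isMonochromatic pythColoring_avoidsMultiples hb ha hc (IsMonochromatic.swap hmono)
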